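/- Let α and β be real numbers with 0 < α < 1 and 0 < β < 1. For real y > 2, define F(y) as the value of the continued fraction (y+2(1−α−β))/2 + K_{m=1}^∞(a_m/b_m(y)), where for m ≥ 1: a_{2m} = (2m−α−β)(2m−α)(2m−β)/4, a_{2m−1} = (2m−2+α+β)(2m−2+α)(2m−2+β)/4, b_{2m}(y) = y+2(1−α−β), b_{2m−1}(y) = (2m−1)y. Then for every real x > 2, the continued fractions defining F(x) and F(x+2) converge to positive real values, and F(x)/F(x+2) = (x+2−α−2β)(x+2)(x+2−2α−β) / [(x+2−α)(x+4−2α−2β)(x+2−β)]. -/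

import Mathlib

open Filter

noncomputable def cfA (a b : ℕ → ℝ) : ℕ → ℝ
  | 0 => 1
  | 1 => b 0
  | n + 2 => b (n + 1) * cfA a b (n + 1) + a (n + 1) * cfA a b n

noncomputable def cfB (a b : ℕ → ℝ) : ℕ → ℝ
  | 0 => 0
  | 1 => 1
  | n + 2 => b (n + 1) * cfB a b (n + 1) + a (n + 1) * cfB a b n

/-- The continued fraction `b 0 + K_{n=1}^∞ (a n / b n)` converges to `v`. -/
def CFConvergesTo (a b : ℕ → ℝ) (v : ℝ) : Prop :=
  (∀ᶠ n in atTop, cfB a b n ≠ 0) ∧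
    Tendsto (fun n => cfA a b n / cfB a b n) atTop (nhds v)
/-- `a_{2m} = (2m−α−β)(2m−α)(2m−β)/4`, `a_{2m−1} = (2m−2+α+β)(2m−2+α)(2m−2+β)/4`. -/
noncomputable def aSeq (α β : ℝ) : ℕ → ℝ := fun n =>
  if n % 2 = 0 then
    ((n : ℝ) - α - β) * ((n : ℝ) - α) * ((n : ℝ) - β) / 4
  else
    ((n : ℝ) - 1 + α + β) * ((n : ℝ) - 1 + α) * ((n : ℝ) - 1 + β) / 4

/-- `b_0 = (y+2(1−α−β))/2`, `b_{2m}(y) = y+2(1−α−β)`, `b_{2m−1}(y) = (2m−1)y`. -/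
noncomputable def bSeq (α β : ℝ) (y : ℝ) : ℕ → ℝ := fun n =>
  if n = 0 then (y + 2 * (1 - α - β)) / 2
  else if n % 2 = 0 then y + 2 * (1 - α - β) else (n : ℝ) * y

theorem aSeq_odd (α β : ℝ) (m : ℕ) :
    aSeq α β (2 * m + 1) = (2 * m + α + β) * (2 * m + α) * (2 * m + β) / 4 := by
  have h : (2 * m + 1) % 2 ≠ 0 := by omega
  simp only [aSeq, if_neg h]
  push_cast
  ring

theorem aSeq_even (α β : ℝ) (m : ℕ) :
    aSeq α β (2 * m + 2) =
      (2 * m + 2 - α - β) * (2 * m + 2 - α) * (2 * m + 2 - β) / 4 := by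
  have h : (2 * m + 2) % 2 = 0 := by omega
  simp only [aSeq, if_pos h]
  push_cast
  ring

theorem bSeq_odd (α β y : ℝ) (m : ℕ) : bSeq α β y (2 * m + 1) = (2 * m + 1) * y := by
  have h : (2 * m + 1) % 2 ≠ 0 := by omega
  have h0 : 2 * m + 1 ≠ 0 := by omega
  simp only [bSeq, if_neg h, if_neg h0]
  push_cast
  ring

theorem bSeq_even (α β y : ℝ) (m : ℕ) :
    bSeq α β y (2 * m + 2) = y + 2 * (1 - α - β) := by
  have h : (2 * m + 2) % 2 = 0 := by omega
  have h0 : 2 * m + 2 ≠ 0 := by omega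
  simp only [bSeq, if_pos h, if_neg h0]

theorem even_odd_cases {P : ℕ → Prop} (h1 : ∀ m, P (2 * m + 1)) (h2 : ∀ m, P (2 * m + 2)) :
    ∀ n, P (n + 1) := by
  intro n
  rcases Nat.even_or_odd' n with ⟨m, rfl | rfl⟩
  · exact h1 m
  · exact h2 m

theorem aSeq_pos (α β : ℝ) (hα0 : 0 < α) (hα1 : α < 1) (hβ0 : 0 < β) (hβ1 : β < 1) :
    ∀ n, 0 < aSeq α β (n + 1) := by
  apply even_odd_cases (P := fun n => 0 < aSeq α β n)
  · intro m
    rw [aSeq_odd]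
    positivity
  · intro m
    rw [aSeq_even]
    have hm : (0 : ℝ) ≤ m := Nat.cast_nonneg m
    have h1 : 0 < 2 * (m : ℝ) + 2 - α - β := by linarith
    have h2 : 0 < 2 * (m : ℝ) + 2 - α := by linarith
    have h3 : 0 < 2 * (m : ℝ) + 2 - β := by linarith
    positivity

theorem bSeq_pos (α β : ℝ) (hα1 : α < 1) (hβ1 : β < 1) (y : ℝ) (hy : 2 < y) :
    ∀ n, 0 < bSeq α β y (n + 1) := by
  apply even_odd_cases (P := fun n => 0 < bSeq α β y n)
  · intro m
    rw [bSeq_odd]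
    have : 0 < y := by linarith
    positivity
  · intro m
    rw [bSeq_even]
    linarith

/-- Two-step gauge transformation between the recurrences at `x` and `x + 2`. -/
theorem cf_gauge (α β x u : ℝ) (X Y : ℕ → ℝ)
    (hX : ∀ n, X (n + 2) = bSeq α β x (n + 1) * X (n + 1) + aSeq α β (n + 1) * X n)
    (hY : ∀ n, Y (n + 2) = bSeq α β (x + 2) (n + 1) * Y (n + 1) + aSeq α β (n + 1) * Y n)
    (h1 : (x + 2 - α) * (x + 4 - 2 * α - 2 * β) * (x + 2 - β) * X 1
      + 4 * (x + 4 - 2 * α - 2 * β) * aSeq α β 1 * X 0 = u * Y 1)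
    (h0 : (x + 2 - α - 2 * β) * (x + 2) * (x + 2 - 2 * α - β) * X 0 = u * Y 0) (m : ℕ) :
    ((x + 2 - α) * (x + 4 - 2 * α - 2 * β) * (x + 2 - β)
        + 4 * (x + 4 - 2 * α - 2 * β) * m * (x + 2 + 2 * m)) * X (2 * m + 1)
      + 4 * (x + 4 - 2 * α - 2 * β) * aSeq α β (2 * m + 1) * X (2 * m) = u * Y (2 * m + 1) ∧
    8 * (x + 2) * m * X (2 * m + 1)
      + ((x + 2 - α - 2 * β) * (x + 2) * (x + 2 - 2 * α - β)
        + 4 * (x + 2) * m * (2 * m + 2 - (x + 4 - 2 * α - 2 * β))) * X (2 * m)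
      = u * Y (2 * m) := by
  induction m with
  | zero =>
    constructor
    · simpa using h1
    · simpa using h0
  | succ m ih =>
    obtain ⟨i1, i2⟩ := ih
    have e1 := hX (2 * m)
    have e2 := hX (2 * m + 1)
    have f1 := hY (2 * m)
    have f2 := hY (2 * m + 1)
    have s1 : 2 * (m + 1) = 2 * m + 2 := by ring
    have s2 : 2 * m + 1 + 1 = 2 * m + 2 := by ring
    have s3 : 2 * m + 1 + 2 = 2 * m + 2 + 1 := by ring
    have a3 := aSeq_odd α β (m + 1)
    rw [s1] at a3 ⊢
    simp only [s2, s3] at e2 f2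
    rw [bSeq_odd, aSeq_odd] at e1 f1
    rw [bSeq_even, aSeq_even] at e2 f2
    rw [aSeq_odd] at i1
    rw [a3]
    push_cast
    generalize X (2 * m + 2 + 1) = X3 at *
    generalize X (2 * m + 2) = X2 at *
    generalize X (2 * m + 1) = X1 at *
    generalize X (2 * m) = X0 at *
    generalize Y (2 * m + 2 + 1) = Y3 at *
    generalize Y (2 * m + 2) = Y2 at *
    generalize Y (2 * m + 1) = Y1 at *
    generalize Y (2 * m) = Y0 at *
    generalize (m : ℝ) = M at *
    clear hX hY h1 h0 a3
    subst e2 f2 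
    subst e1 f1
    constructor
    · linear_combination ((x + 2 + 2 * (1 - α - β)) * ((2 * M + 1) * (x + 2))
        + (2 * M + 2 - α - β) * (2 * M + 2 - α) * (2 * M + 2 - β) / 4) * i1
        + (x + 2 + 2 * (1 - α - β)) *
          ((2 * M + α + β) * (2 * M + α) * (2 * M + β) / 4) * i2
    · linear_combination ((2 * M + 1) * (x + 2)) * i1
        + ((2 * M + α + β) * (2 * M + α) * (2 * M + β) / 4) * i2

theorem cfB_pos (a b : ℕ → ℝ) (ha : ∀ n, 0 < a (n + 1)) (hb : ∀ n, 0 < b (n + 1)) :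
    ∀ n, 0 < cfB a b (n + 1) ∧ 0 ≤ cfB a b n := by
  intro n
  induction n with
  | zero => simp [cfB]
  | succ n ih =>
    refine ⟨?_, ih.1.le⟩
    rw [cfB]
    have := mul_pos (hb n) ih.1
    have := mul_nonneg (ha n).le ih.2
    linarith

theorem cf_det (a b : ℕ → ℝ) (n : ℕ) :
    cfA a b (n + 1) * cfB a b n - cfA a b n * cfB a b (n + 1)
      = -((-1) ^ n * ∏ i ∈ Finset.range n, a (i + 1)) := by
  induction n with
  | zero => simp [cfA, cfB]
  | succ n ih =>
    rw [Finset.prod_range_succ, pow_succ, cfA, cfB]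
    linear_combination (-a (n + 1)) * ih

theorem cf_conv (a b : ℕ → ℝ) (k : ℝ) (hk : 0 < k) (ha : ∀ n, 0 < a (n + 1))
    (hb : ∀ n, 0 < b (n + 1)) (hb0 : 0 < b 0)
    (hab : ∀ n : ℕ, k ^ 2 * a (n + 2) ≤ ((n : ℝ) + 2) ^ 2 * (b (n + 1) * b (n + 2))) :
    ∃ v, CFConvergesTo a b v ∧ 0 < v := by
  have hB : ∀ n, 0 < cfB a b (n + 1) := fun n => (cfB_pos a b ha hb n).1
  set P : ℕ → ℝ := fun n => ∏ i ∈ Finset.range n, a (i + 1) with hP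
  have hPpos : ∀ n, 0 < P n := fun n => Finset.prod_pos (fun i _ => ha i)
  have hPs : ∀ n, P (n + 1) = P n * a (n + 1) := fun n => Finset.prod_range_succ _ _
  set D : ℕ → ℝ := fun n => cfB a b (n + 1) * cfB a b (n + 2) / P (n + 1) with hD
  have hDpos : ∀ n, 0 < D n := fun n => div_pos (mul_pos (hB n) (hB (n + 1))) (hPpos _)
  set e : ℕ → ℝ := fun n => b (n + 1) * cfB a b (n + 1) ^ 2 / P (n + 1) with he
  have hepos : ∀ n, 0 < e n := fun n => div_pos (mul_pos (hb n) (pow_pos (hB n) 2)) (hPpos _)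
  have hDs : ∀ n, D (n + 1) = D n + e (n + 1) := by
    intro n
    simp only [hD, he]
    have h3 : cfB a b (n + 3) = b (n + 2) * cfB a b (n + 2) + a (n + 2) * cfB a b (n + 1) := by
      rw [cfB]
    have hp := hPs (n + 1)
    have h1 := (hPpos (n + 1)).ne'
    have h2 := (ha (n + 1)).ne'
    simp only [add_assoc, Nat.reduceAdd] at *
    rw [h3, hp]
    field_simp
    ring
  have hmono : Monotone D := monotone_nat_of_le_succ (fun n => by
    rw [hDs]; linarith [hepos (n + 1)])
  have hee : ∀ n, e n * e (n + 1) = b (n + 1) * b (n + 2) / a (n + 2) * D n ^ 2 := by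
    intro n
    simp only [hD, he]
    have hp := hPs (n + 1)
    have h1 := (hPpos (n + 1)).ne'
    have h2 := (ha (n + 1)).ne'
    simp only [add_assoc, Nat.reduceAdd] at *
    rw [hp]
    field_simp
  have hstep : ∀ n : ℕ, D n + 2 * k * D 0 / ((n : ℝ) + 3) ≤ D (n + 2) := by
    intro n
    have h1 : D (n + 2) = D n + (e (n + 1) + e (n + 2)) := by
      rw [hDs (n + 1), hDs n]; ring
    rw [h1]
    have hn : (0 : ℝ) < (n : ℝ) + 3 := by positivity
    have h2 : 2 * k * D 0 / ((n : ℝ) + 3) ≤ e (n + 1) + e (n + 2) := by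
      apply le_of_sq_le_sq _ (by linarith [hepos (n + 1), hepos (n + 2)])
      have h3 : (k / ((n : ℝ) + 3)) ^ 2 ≤ b (n + 2) * b (n + 3) / a (n + 3) := by
        rw [div_pow, div_le_div_iff₀ (by positivity) (ha (n + 2))]
        have := hab (n + 1)
        push_cast at this
        ring_nf at this ⊢
        linarith
      have h4 : D 0 ^ 2 ≤ D (n + 1) ^ 2 :=
        pow_le_pow_left₀ (hDpos 0).le (hmono (Nat.zero_le _)) 2
      have h5 := hee (n + 1)
      have h6 : (k / ((n : ℝ) + 3)) ^ 2 * D 0 ^ 2 ≤ e (n + 1) * e (n + 2) := by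
        rw [h5]
        exact mul_le_mul h3 h4 (by positivity) (le_trans (by positivity) h3)
      calc (2 * k * D 0 / ((n : ℝ) + 3)) ^ 2
          = 4 * ((k / ((n : ℝ) + 3)) ^ 2 * D 0 ^ 2) := by field_simp; ring
        _ ≤ 4 * (e (n + 1) * e (n + 2)) := by linarith
        _ ≤ (e (n + 1) + e (n + 2)) ^ 2 := by nlinarith [sq_nonneg (e (n + 1) - e (n + 2))]
    linarith
  have hsum : ∀ n : ℕ, k * D 0 / 2 * (∑ i ∈ Finset.range n, 1 / ((i : ℝ) + 1)) ≤ D (2 * n) := by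
    intro n
    induction n with
    | zero => simpa using (hDpos 0).le
    | succ n ih =>
      rw [Finset.sum_range_succ, mul_add]
      have h1 := hstep (2 * n)
      have h2 : k * D 0 / 2 * (1 / ((n : ℝ) + 1)) ≤ 2 * k * D 0 / (((2 * n : ℕ) : ℝ) + 3) := by
        push_cast
        have hkd : 0 < k * D 0 := mul_pos hk (hDpos 0)
        rw [div_mul_div_comm, div_le_div_iff₀ (by positivity) (by positivity)]
        have hn : (0 : ℝ) ≤ n := Nat.cast_nonneg n
        nlinarith [mul_nonneg hkd.le hn]
      have h3 : 2 * (n + 1) = 2 * n + 2 := by ring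
      rw [h3]
      linarith
  have hDtop : Tendsto D atTop atTop := by
    apply tendsto_atTop_atTop_of_monotone hmono
    intro c
    have hc : 0 < k * D 0 / 2 := by have := hDpos 0; positivity
    have h1 := (Real.tendsto_sum_range_one_div_nat_succ_atTop.const_mul_atTop hc)
    obtain ⟨n, hn⟩ := (h1.eventually_ge_atTop c).exists
    exact ⟨2 * n, hn.trans (hsum n)⟩
  have hinv : Tendsto (fun n => (D n)⁻¹) atTop (nhds 0) := tendsto_inv_atTop_zero.comp hDtop
  have hanti : Antitone (fun n => (D n)⁻¹) := fun i j hij => inv_anti₀ (hDpos i) (hmono hij)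
  obtain ⟨l, hl⟩ := hanti.tendsto_alternating_series_of_tendsto_zero hinv
  have hl0 : 0 ≤ l := by
    have := hanti.alternating_series_le_tendsto hl 0
    simpa using this
  have hc : ∀ n, cfA a b (n + 1) / cfB a b (n + 1)
      = b 0 + ∑ i ∈ Finset.range n, (-1) ^ i * (D i)⁻¹ := by
    intro n
    induction n with
    | zero => simp [cfA, cfB]
    | succ n ih =>
      rw [Finset.sum_range_succ, ← add_assoc, ← ih]
      have hd := cf_det a b (n + 1)
      have h1 := (hB n).ne'
      have h2 := (hB (n + 1)).ne'
      have h3 := (hPpos (n + 1)).ne'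
      have hd' : cfA a b (n + 2) * cfB a b (n + 1) - cfA a b (n + 1) * cfB a b (n + 2)
        = (-1) ^ n * P (n + 1) := by
        rw [hd, pow_succ]; ring
      simp only [hD]
      simp only [add_assoc, Nat.reduceAdd] at *
      field_simp
      linear_combination hd'
  refine ⟨b 0 + l, ⟨?_, ?_⟩, by linarith⟩
  · filter_upwards [eventually_ge_atTop 1] with n hn
    obtain ⟨m, rfl⟩ := Nat.exists_eq_add_of_le' hn
    exact (hB m).ne'
  · rw [← tendsto_add_atTop_iff_nat 1]
    simp only [hc]
    exact hl.const_add _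

theorem F_conv (α β : ℝ) (hα0 : 0 < α) (hα1 : α < 1) (hβ0 : 0 < β) (hβ1 : β < 1)
    (y : ℝ) (hy : 2 < y) :
    ∃ v, CFConvergesTo (aSeq α β) (bSeq α β y) v ∧ 0 < v := by
  have hz : 0 < y + 2 * (1 - α - β) := by linarith
  apply cf_conv (aSeq α β) (bSeq α β y) (Real.sqrt (y + 2 * (1 - α - β)))
    (Real.sqrt_pos.2 hz) (aSeq_pos α β hα0 hα1 hβ0 hβ1) (bSeq_pos α β hα1 hβ1 y hy)
  · simp only [bSeq, if_true]
    linarith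
  · rw [Real.sq_sqrt hz.le]
    intro n
    generalize hzz : y + 2 * (1 - α - β) = z at *
    rcases Nat.even_or_odd' n with ⟨m, rfl | rfl⟩
    · rw [aSeq_even, bSeq_even, bSeq_odd, hzz]
      push_cast
      have hm : (0 : ℝ) ≤ m := Nat.cast_nonneg m
      generalize (m : ℝ) = M at *
      have h1 : (2 * M + 2 - α - β) * (2 * M + 2 - α) * (2 * M + 2 - β)
          ≤ (2 * M + 2) * (2 * M + 2) * (2 * M + 2) := by
        gcongr <;> linarith
      have h2 : (2 * M + 1) * 2 ≤ (2 * M + 1) * y := by gcongr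
      have h3 : (2 * M + 2) * (2 * M + 2) * (2 * M + 2) / 4
          ≤ (2 * M + 2) ^ 2 * ((2 * M + 1) * y) := by
        nlinarith [mul_nonneg (sq_nonneg (2 * M + 2)) hm,
          mul_le_mul_of_nonneg_left h2 (sq_nonneg (2 * M + 2))]
      nlinarith [mul_le_mul_of_nonneg_left h3 hz.le, mul_le_mul_of_nonneg_left h1 hz.le]
    · have s : 2 * m + 1 + 2 = 2 * (m + 1) + 1 := by ring
      have s' : 2 * m + 1 + 1 = 2 * m + 2 := by ring
      rw [s, s', aSeq_odd, bSeq_even, bSeq_odd, hzz]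
      push_cast
      have hm : (0 : ℝ) ≤ m := Nat.cast_nonneg m
      generalize (m : ℝ) = M at *
      have h1 : (2 * (M + 1) + α + β) * (2 * (M + 1) + α) * (2 * (M + 1) + β)
          ≤ (2 * M + 4) * (2 * M + 3) * (2 * M + 3) := by
        have g1 : 2 * (M + 1) + α + β ≤ 2 * M + 4 := by linarith
        have g2 : 2 * (M + 1) + α ≤ 2 * M + 3 := by linarith
        have g3 : 2 * (M + 1) + β ≤ 2 * M + 3 := by linarith
        exact mul_le_mul (mul_le_mul g1 g2 (by positivity) (by positivity)) g3
          (by positivity) (by positivity)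
      have h2 : (2 * M + 3) * 2 ≤ (2 * M + 3) * y := by gcongr
      have h3 : (2 * M + 4) * (2 * M + 3) * (2 * M + 3) / 4
          ≤ (2 * M + 3) ^ 2 * ((2 * M + 3) * y) := by
        nlinarith [mul_nonneg (sq_nonneg (2 * M + 3)) hm,
          mul_le_mul_of_nonneg_left h2 (sq_nonneg (2 * M + 3))]
      nlinarith [mul_le_mul_of_nonneg_left h3 hz.le, mul_le_mul_of_nonneg_left h1 hz.le]

theorem stmt17 (α β : ℝ) (hα0 : 0 < α) (hα1 : α < 1) (hβ0 : 0 < β) (hβ1 : β < 1)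
    (x : ℝ) (hx : 2 < x) :
    ∃ F1 F2 : ℝ, CFConvergesTo (aSeq α β) (bSeq α β x) F1 ∧ 0 < F1 ∧
      CFConvergesTo (aSeq α β) (bSeq α β (x + 2)) F2 ∧ 0 < F2 ∧
      F1 / F2 = (x + 2 - α - 2 * β) * (x + 2) * (x + 2 - 2 * α - β) /
        ((x + 2 - α) * (x + 4 - 2 * α - 2 * β) * (x + 2 - β)) := by
  obtain ⟨F1, hF1, hp1⟩ := F_conv α β hα0 hα1 hβ0 hβ1 x hx
  obtain ⟨F2, hF2, hp2⟩ := F_conv α β hα0 hα1 hβ0 hβ1 (x + 2) (by linarith)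
  refine ⟨F1, F2, hF1, hp1, hF2, hp2, ?_⟩
  rw [div_eq_iff hp2.ne']
  set Δ := (x + 2 - α) * (x + 4 - 2 * α - 2 * β) * (x + 2 - β) with hΔ
  set T := (x + 2 - α - 2 * β) * (x + 2) * (x + 2 - 2 * α - β) with hT
  have hz : 0 < x + 4 - 2 * α - 2 * β := by linarith
  have hya : 0 < x + 2 - α := by linarith
  have hyb : 0 < x + 2 - β := by linarith
  have hΔ0 : 0 < Δ := by positivity
  have ha := aSeq_pos α β hα0 hα1 hβ0 hβ1
  have hB := cfB_pos (aSeq α β) (bSeq α β x) ha (bSeq_pos α β hα1 hβ1 x hx)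
  have hB' := cfB_pos (aSeq α β) (bSeq α β (x + 2)) ha
    (bSeq_pos α β hα1 hβ1 (x + 2) (by linarith))
  have a1 : aSeq α β 1 = (α + β) * α * β / 4 := by
    have := aSeq_odd α β 0
    simpa using this
  have gA := cf_gauge α β x T (cfA (aSeq α β) (bSeq α β x)) (cfA (aSeq α β) (bSeq α β (x + 2)))
    (fun n => by rw [cfA]) (fun n => by rw [cfA])
    (by
      rw [a1]
      simp only [cfA, bSeq, if_true, hT]
      ring)
    (by simp only [cfA, hT])
  have gB := cf_gauge α β x Δ (cfB (aSeq α β) (bSeq α β x)) (cfB (aSeq α β) (bSeq α β (x + 2)))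
    (fun n => by rw [cfB]) (fun n => by rw [cfB])
    (by simp [cfB, hΔ]) (by simp [cfB])
  have hsub1 : Tendsto (fun m : ℕ => 2 * m + 1) atTop atTop :=
    tendsto_atTop_mono (fun m => by simp only [id]; omega) tendsto_id
  have hsub0 : Tendsto (fun m : ℕ => 2 * m) atTop atTop :=
    tendsto_atTop_mono (fun m => by simp only [id]; omega) tendsto_id
  have c1 := hF1.2.comp hsub1
  have c0 := hF1.2.comp hsub0
  have d1 := (hF2.2.comp hsub1).const_mul (T / Δ)
  refine tendsto_nhds_unique c1 ?_
  have hdiff : Tendsto (fun m : ℕ => T / Δ * (cfA (aSeq α β) (bSeq α β (x + 2)) (2 * m + 1) /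
      cfB (aSeq α β) (bSeq α β (x + 2)) (2 * m + 1)) -
      cfA (aSeq α β) (bSeq α β x) (2 * m + 1) / cfB (aSeq α β) (bSeq α β x) (2 * m + 1))
      atTop (nhds 0) := by
    have c10 := (c0.sub c1).abs
    rw [sub_self, abs_zero] at c10
    refine squeeze_zero_norm' ?_ c10
    filter_upwards [eventually_ge_atTop 1] with m hm
    obtain ⟨j, rfl⟩ := Nat.exists_eq_add_of_le' hm
    have g1 := (gA (j + 1)).1
    have g2 := (gB (j + 1)).1
    have b1 := (hB (2 * (j + 1))).1
    have b0 := (hB (2 * j + 1)).1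
    have b1' := (hB' (2 * (j + 1))).1
    have s : 2 * j + 1 + 1 = 2 * (j + 1) := by ring
    rw [s] at b0
    have hr : 0 < 4 * (x + 4 - 2 * α - 2 * β) * aSeq α β (2 * (j + 1) + 1) := by
      have := ha (2 * (j + 1))
      positivity
    have hp : 0 < Δ + 4 * (x + 4 - 2 * α - 2 * β) * ((j + 1 : ℕ) : ℝ)
        * (x + 2 + 2 * ((j + 1 : ℕ) : ℝ)) := by
      have : 0 < x := by linarith
      positivity
    rw [← hΔ] at g1 g2
    simp only [Function.comp, Real.norm_eq_abs]
    generalize Δ + 4 * (x + 4 - 2 * α - 2 * β) * ((j + 1 : ℕ) : ℝ)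
        * (x + 2 + 2 * ((j + 1 : ℕ) : ℝ)) = p at *
    generalize 4 * (x + 4 - 2 * α - 2 * β) * aSeq α β (2 * (j + 1) + 1) = r at *
    generalize cfA (aSeq α β) (bSeq α β x) (2 * (j + 1) + 1) = A1 at *
    generalize cfA (aSeq α β) (bSeq α β x) (2 * (j + 1)) = A0 at *
    generalize cfB (aSeq α β) (bSeq α β x) (2 * (j + 1) + 1) = B1 at *
    generalize cfB (aSeq α β) (bSeq α β x) (2 * (j + 1)) = B0 at *
    generalize cfA (aSeq α β) (bSeq α β (x + 2)) (2 * (j + 1) + 1) = C1 at *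
    generalize cfB (aSeq α β) (bSeq α β (x + 2)) (2 * (j + 1) + 1) = D1 at *
    have hden : 0 < p * B1 + r * B0 := by positivity
    have key : T / Δ * (C1 / D1) - A1 / B1
        = r * B0 / (p * B1 + r * B0) * (A0 / B0 - A1 / B1) := by
      have : T / Δ * (C1 / D1) = (p * A1 + r * A0) / (p * B1 + r * B0) := by
        rw [g1, g2, div_mul_div_comm]
      rw [this]
      field_simp
      ring
    rw [key, abs_mul]
    have hw : |r * B0 / (p * B1 + r * B0)| ≤ 1 := by
      rw [abs_of_pos (by positivity), div_le_one hden]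
      have : 0 < p * B1 := by positivity
      linarith
    exact mul_le_of_le_one_left (abs_nonneg _) hw
  have := d1.sub hdiff
  rw [sub_zero] at this
  refine this.congr (fun m => ?_)
  simp only [Function.comp]
  ring
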